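/- arXiv:math/0602180 — 10 statements merged into one kernel-verified Lean document; each statement's English description precedes it below -/
import Mathlib

section
/- Let ∂ : C → B be a crossed module. On the semidirect product G = C ⋊ B (with B acting on C by the given action, so (c,b)·(c',b') = (c·ᵇc', b·b')), define maps s, t : G → G by s(c,b) = (1,b) and t(c,b) = (1, ∂(c)·b). Then s and t are group endomorphisms of G satisfying s∘t = t, t∘s = s, and every element of ker s commutes with every element of ker t (i.e. ⁅ker s, ker t⁆ = 1); that is, (G,s,t) is a cat¹-group. -/
/-!
For `s = ι ∘ p` and `t = ι ∘ q` with `ι` a common section of `p` and `q`, the identities `s ∘ t = t`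
and `t ∘ s = s` are formal, and `s`, `t` have the same kernels as `p`, `q`. Here `ι b = (1, b)`,
`p (c, b) = b` and `q (c, b) = d c * b`. Multiplicativity of `q` is the equivariance of `d`. The
kernel of `p` consists of the `(c, 1)` and that of `q` of the `(c, (d c)⁻¹)`; conjugating `(c', 1)`
by `(c, (d c)⁻¹)` first undoes the action of `d c` and then conjugates by `c`, and these cancel by
the Peiffer identity.
-/

open SemidirectProduct

/-- A cat¹-group: endomorphisms `s` and `t` of a group with `s ∘ t = t`, `t ∘ s = s` and
`⁅ker s, ker t⁆ = 1`, stated as a property of the pair `(s, t)`. -/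
structure IsCatOneGroup {G : Type*} [Group G] (s t : G →* G) : Prop where
  source_comp_target : s.comp t = t
  target_comp_source : t.comp s = s
  commutator_ker : ⁅s.ker, t.ker⁆ = ⊥

theorem IsCatOneGroup.commute {G : Type*} [Group G] {s t : G →* G} (hst : IsCatOneGroup s t)
    {g h : G} (hg : s g = 1) (hh : t h = 1) : Commute g h :=
  commutatorElement_eq_one_iff_commute.mp <| Subgroup.mem_bot.mp <|
    hst.commutator_ker ▸ Subgroup.commutator_mem_commutator hg hh

theorem IsCatOneGroup.of_common_section {G B : Type*} [Group G] [Group B] {p q : G →* B}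
    {ι : B →* G} (hp : p.comp ι = MonoidHom.id B) (hq : q.comp ι = MonoidHom.id B)
    (hpq : ⁅p.ker, q.ker⁆ = ⊥) : IsCatOneGroup (ι.comp p) (ι.comp q) where
  source_comp_target := by
    rw [MonoidHom.comp_assoc, ← MonoidHom.comp_assoc q, hp, MonoidHom.id_comp]
  target_comp_source := by
    rw [MonoidHom.comp_assoc, ← MonoidHom.comp_assoc p, hq, MonoidHom.id_comp]
  commutator_ker := by
    have hι : Function.Injective ι :=
      Function.LeftInverse.injective (g := p) (DFunLike.congr_fun hp)
    rwa [MonoidHom.ker_comp_of_injective p ι hι, MonoidHom.ker_comp_of_injective q ι hι]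

/-- A precrossed module: a homomorphism `d : C →* B` that is equivariant for the action `φ` of `B`
on `C` and the conjugation action of `B` on itself. -/
structure IsPrecrossedModule {C B : Type*} [Group C] [Group B] (φ : B →* MulAut C)
    (d : C →* B) : Prop where
  map_action : ∀ b c, d (φ b c) = b * d c * b⁻¹

/-- A crossed module: a precrossed module in which `C` acts on itself through `d` by conjugation
(the Peiffer identity). -/
structure IsCrossedModule {C B : Type*} [Group C] [Group B] (φ : B →* MulAut C)
    (d : C →* B) : Prop extends IsPrecrossedModule φ d where
  peiffer : ∀ c c', φ (d c) c' = c * c' * c⁻¹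

section CrossedModule

variable {C B : Type*} [Group C] [Group B] {φ : B →* MulAut C} {d : C →* B}

namespace IsPrecrossedModule

/-- The target homomorphism `(c, b) ↦ d c * b` of a precrossed module, with values in `B`; the
endomorphism `t` of `C ⋊[φ] B` is its composite with `inr`. -/
def targetHom (h : IsPrecrossedModule φ d) : C ⋊[φ] B →* B :=
  lift d (MonoidHom.id B) fun b ↦ MonoidHom.ext (h.map_action b)

theorem targetHom_apply (h : IsPrecrossedModule φ d) (g : C ⋊[φ] B) :
    h.targetHom g = d g.left * g.right :=
  rfl

theorem targetHom_comp_inr (h : IsPrecrossedModule φ d) :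
    h.targetHom.comp inr = MonoidHom.id B :=
  lift_comp_inr ..

theorem mem_ker_targetHom (h : IsPrecrossedModule φ d) {g : C ⋊[φ] B} :
    g ∈ h.targetHom.ker ↔ g.right = (d g.left)⁻¹ := by
  rw [MonoidHom.mem_ker, targetHom_apply, mul_eq_one_iff_inv_eq, eq_comm]

end IsPrecrossedModule

namespace IsCrossedModule

theorem action_inv (h : IsCrossedModule φ d) (c c' : C) : φ (d c)⁻¹ c' = c⁻¹ * c' * c := by
  rw [← map_inv, h.peiffer, inv_inv]

theorem commute_inl_of_mem_ker_targetHom (h : IsCrossedModule φ d) (c : C) {g : C ⋊[φ] B}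
    (hg : g ∈ h.targetHom.ker) : Commute (inl c) g := by
  have hright : g.right = (d g.left)⁻¹ := h.mem_ker_targetHom.mp hg
  have hleft : c * g.left = g.left * φ g.right c := by
    rw [hright, h.action_inv]
    group
  ext
  · simpa using hleft
  · simp

theorem commutator_ker_rightHom_ker_targetHom (h : IsCrossedModule φ d) :
    ⁅(rightHom : C ⋊[φ] B →* B).ker, h.targetHom.ker⁆ = ⊥ := by
  rw [← range_inl_eq_ker_rightHom, eq_bot_iff, Subgroup.commutator_le]
  rintro _ ⟨c, rfl⟩ g hg
  exact commutatorElement_eq_one_iff_commute.mpr (h.commute_inl_of_mem_ker_targetHom c hg)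

theorem isCatOneGroup (h : IsCrossedModule φ d) :
    IsCatOneGroup (inr.comp (rightHom : C ⋊[φ] B →* B)) (inr.comp h.targetHom) :=
  .of_common_section rightHom_comp_inr h.targetHom_comp_inr h.commutator_ker_rightHom_ker_targetHom

end IsCrossedModule

end CrossedModule

/-- Given a crossed module `∂ : C → B`, the semidirect product
`G = C ⋊ B` with `s(c,b) = (1,b)` and `t(c,b) = (1, ∂(c)·b)` is a cat¹-group:
`s` and `t` are endomorphisms, `s∘t = t`, `t∘s = s`, and `⁅ker s, ker t⁆ = 1`. -/
theorem cat1_of_crossed_module {C B : Type*} [Group C] [Group B]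
    [MulDistribMulAction B C] (d : C →* B)
    (hconj : ∀ (b : B) (c : C), d (b • c) = b * d c * b⁻¹)
    (hpeiffer : ∀ c c' : C, d c • c' = c * c' * c⁻¹)
    (s t : C ⋊[MulDistribMulAction.toMulAut B C] B →
      C ⋊[MulDistribMulAction.toMulAut B C] B)
    (hs : ∀ g, s g = ⟨1, g.right⟩)
    (ht : ∀ g, t g = ⟨1, d g.left * g.right⟩) :
    (∀ g h, s (g * h) = s g * s h) ∧
    (∀ g h, t (g * h) = t g * t h) ∧
    (∀ g, s (t g) = t g) ∧
    (∀ g, t (s g) = s g) ∧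
    (∀ g h, s g = 1 → t h = 1 → g * h = h * g) := by
  have hd : IsCrossedModule (MulDistribMulAction.toMulAut B C) d := ⟨⟨hconj⟩, hpeiffer⟩
  obtain rfl : s = inr.comp rightHom := funext hs
  obtain rfl : t = inr.comp hd.targetHom := funext ht
  have hcat := hd.isCatOneGroup
  exact ⟨map_mul _, map_mul _, DFunLike.congr_fun hcat.source_comp_target,
    DFunLike.congr_fun hcat.target_comp_source, fun _ _ hg hh ↦ hcat.commute hg hh⟩
end

section
/- Let (G,s,t) be a cat¹-group. Then: (a) t maps ker s into the range of s; (b) for every c ∈ ker s and every b in the range of s, b·c·b⁻¹ ∈ ker s; and (c) the conjugation action of the subgroup range s on ker s together with the homomorphism ∂ : ker s → range s obtained by restricting t is a crossed module, i.e. ∂(b·c·b⁻¹) = b·∂(c)·b⁻¹ for all b ∈ range s, c ∈ ker s, and ∂(c)·c'·∂(c)⁻¹ = c·c'·c⁻¹ for all c, c' ∈ ker s. -/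
/-! Since `t ∘ s = s`, the map `t` fixes `range s` pointwise, so it commutes with conjugation by
elements of `range s`. Since `s ∘ t = t`, it also takes values in `range s`, so `t (t c) = t c`:
the elements `c` and `t c` differ by an element of `ker t`, which commutes with `ker s`. Hence
conjugation by `c` and by `t c` agree on `ker s`, which is the Peiffer identity. -/

section

variable {G : Type*} [Group G]

theorem conj_eq_conj_iff_commute {a b g : G} :
    a * g * a⁻¹ = b * g * b⁻¹ ↔ Commute (a⁻¹ * b) g := by
  rw [eq_mul_inv_iff_mul_eq, mul_assoc, mul_assoc, ← eq_inv_mul_iff_mul_eq, ← mul_assoc a⁻¹,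
    eq_comm, commute_iff_eq]

theorem map_conj_of_map_eq_self {t : G →* G} {b : G} (hb : t b = b) (c : G) :
    t (b * c * b⁻¹) = b * t c * b⁻¹ := by
  rw [map_mul, map_mul, map_inv, hb]

theorem conj_eq_conj_of_map_eq {M : Type*} [MulOneClass M] {f : G →* M} {a b g : G}
    (hab : f a = f b) (hg : g ∈ Subgroup.centralizer (f.ker : Set G)) :
    a * g * a⁻¹ = b * g * b⁻¹ := by
  have inv_mul_mem_ker : a⁻¹ * b ∈ f.ker := f.eq_iff.mp hab.symm
  exact conj_eq_conj_iff_commute.mpr (Subgroup.mem_centralizer_iff.mp hg _ inv_mul_mem_ker)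

end

/-- Given a cat¹-group `(G,s,t)`: `t` maps `ker s` into `range s`,
`ker s` is stable under conjugation by elements of `range s`, and the conjugation
action of `range s` on `ker s` together with `∂ = t|_{ker s}` is a crossed module. -/
theorem crossed_module_of_cat1 {G : Type*} [Group G] (s t : G →* G)
    (hst : ∀ g, s (t g) = t g) (hts : ∀ g, t (s g) = s g)
    (hcomm : ∀ g h, s g = 1 → t h = 1 → g * h = h * g) :
    (∀ c, s c = 1 → t c ∈ s.range) ∧
    (∀ c, s c = 1 → ∀ b ∈ s.range, s (b * c * b⁻¹) = 1) ∧
    (∀ b ∈ s.range, ∀ c, s c = 1 → t (b * c * b⁻¹) = b * t c * b⁻¹) ∧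
    (∀ c c', s c = 1 → s c' = 1 → t c * c' * (t c)⁻¹ = c * c' * c⁻¹) := by
  have map_mem_range (c : G) : t c ∈ s.range := ⟨t c, hst c⟩
  have map_eq_self {b : G} (hb : b ∈ s.range) : t b = b := by
    obtain ⟨g, rfl⟩ := hb
    exact hts g
  have ker_le_centralizer : s.ker ≤ Subgroup.centralizer (t.ker : Set G) := fun g hg ↦
    Subgroup.mem_centralizer_iff.mpr fun k hk ↦ (hcomm g k hg hk).symm
  refine ⟨fun c _ ↦ map_mem_range c, fun c hc b _ ↦ s.normal_ker.conj_mem c hc b,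
    fun b hb c _ ↦ map_conj_of_map_eq_self (map_eq_self hb) c, fun c c' _ hc' ↦ ?_⟩
  have map_map_eq_map : t (t c) = t c := map_eq_self (map_mem_range c)
  exact conj_eq_conj_of_map_eq map_map_eq_map (ker_le_centralizer hc')
end

section
/- Let (L,M,N,P,λ,λ',μ,ν,h) be a crossed square. Form the semidirect product L ⋊ N, where N acts on L via ν (ⁿl := ^{ν(n)}l), and the semidirect product M ⋊ P. Then the formula ^{(m,p)}(l,n) := (ᵐ(ᵖl)·h(m, ᵖn), ᵖn) defines an action of M ⋊ P on L ⋊ N by group automorphisms; that is, each such map is an automorphism of L ⋊ N and the assignment (m,p) ↦ (this automorphism) is a group homomorphism from M ⋊ P to Aut(L ⋊ N). -/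
/-- A crossed square of groups `(L,M,N,P,λ,λ',μ,ν,h)`: the four maps form a
commutative square over `P`, all of `μ`, `ν`, `μ∘λ`, `λ` (with `M` acting on `L`
via `μ`) and `λ'` (with `N` acting on `L` via `ν`) are crossed modules, `λ`, `λ'`
are `P`-equivariant, and `h : M × N → L` satisfies the usual axioms. -/
structure CrossedSquare (L M N P : Type*) [Group L] [Group M] [Group N] [Group P]
    [MulDistribMulAction P L] [MulDistribMulAction P M] [MulDistribMulAction P N] where
  lam : L →* M
  lam' : L →* N
  mu : M →* P
  nu : N →* P
  comm : ∀ l : L, mu (lam l) = nu (lam' l)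
  mu_conj : ∀ (p : P) (m : M), mu (p • m) = p * mu m * p⁻¹
  mu_peiffer : ∀ m m' : M, mu m • m' = m * m' * m⁻¹
  nu_conj : ∀ (p : P) (n : N), nu (p • n) = p * nu n * p⁻¹
  nu_peiffer : ∀ n n' : N, nu n • n' = n * n' * n⁻¹
  mulam_conj : ∀ (p : P) (l : L), mu (lam (p • l)) = p * mu (lam l) * p⁻¹
  mulam_peiffer : ∀ l l' : L, mu (lam l) • l' = l * l' * l⁻¹
  lam_conj : ∀ (m : M) (l : L), lam (mu m • l) = m * lam l * m⁻¹
  lam'_conj : ∀ (n : N) (l : L), lam' (nu n • l) = n * lam' l * n⁻¹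
  lam'_peiffer : ∀ l l' : L, nu (lam' l) • l' = l * l' * l⁻¹
  lam_equivariant : ∀ (p : P) (l : L), lam (p • l) = p • lam l
  lam'_equivariant : ∀ (p : P) (l : L), lam' (p • l) = p • lam' l
  h : M → N → L
  h_mul_left : ∀ (m m' : M) (n : N), h (m * m') n = h (mu m • m') (mu m • n) * h m n
  h_mul_right : ∀ (m : M) (n n' : N), h m (n * n') = h m n * h (nu n • m) (nu n • n')
  lam_h : ∀ (m : M) (n : N), lam (h m n) = m * (nu n • m)⁻¹
  lam'_h : ∀ (m : M) (n : N), lam' (h m n) = (mu m • n) * n⁻¹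
  h_lam : ∀ (l : L) (n : N), h (lam l) n = l * (nu n • l)⁻¹
  h_lam' : ∀ (m : M) (l : L), h m (lam' l) = (mu m • l) * l⁻¹
  h_equivariant : ∀ (p : P) (m : M) (n : N), h (p • m) (p • n) = p • h m n

/-!
The formula for `^{(m,p)}(l,n)` is what conjugation gives in a group where `h(m, n)` is the
commutator `m n m⁻¹ n⁻¹`, since then `m (l n) m⁻¹ = ᵐl · h(m, n) · n`. So `P` acts on `L ⋊ N`
diagonally, `M` acts by `ᵐ(l, n) = (ᵐl · h(m, n), n)`, and these two actions glue to one of `M ⋊ P`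
because `ᵖ(ᵐx) = ^{ᵖm}(ᵖx)`. The one step that is not formal is that `M` acts by homomorphisms: the
actions of `M` and `N` on `L` need not commute, and the Peiffer identity for `μ ∘ λ`, applied to
`h(m, n)`, says that `h(m, n)` measures the failure.
-/

namespace CrossedSquare

open scoped commutatorElement

variable {L M N P : Type*} [Group L] [Group M] [Group N] [Group P]
  [MulDistribMulAction P L] [MulDistribMulAction P M] [MulDistribMulAction P N]
  (C : CrossedSquare L M N P)

theorem h_one_left (n : N) : C.h 1 n = 1 := by
  simpa using C.h_mul_left 1 1 n

theorem h_one_right (m : M) : C.h m 1 = 1 := by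
  simpa using C.h_mul_right m 1 1

theorem h_mul_left_eq_smul_mul (m m' : M) (n : N) :
    C.h (m * m') n = C.mu m • C.h m' n * C.h m n := by
  rw [C.h_mul_left, C.h_equivariant]

theorem h_mul_right_eq_mul_smul (m : M) (n n' : N) :
    C.h m (n * n') = C.h m n * C.nu n • C.h m n' := by
  rw [C.h_mul_right, C.h_equivariant]

theorem mu_lam_h (m : M) (n : N) :
    C.mu (C.lam (C.h m n)) = ⁅C.mu m, C.nu n⁆ := by
  rw [C.lam_h, map_mul, map_inv, C.mu_conj, commutatorElement_def]
  group

theorem h_mul_smul_smul (m : M) (n : N) (l : L) :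
    C.h m n * C.nu n • C.mu m • l = C.mu m • C.nu n • l * C.h m n := by
  rw [← mul_inv_eq_iff_eq_mul, ← C.mulam_peiffer, C.mu_lam_h]
  simp [commutatorElement_def, mul_smul]

theorem smul_nu_smul (p : P) (n : N) (l : L) :
    p • C.nu n • l = C.nu (p • n) • p • l := by
  simp [C.nu_conj, mul_smul]

theorem smul_mu_smul (p : P) (m : M) (l : L) :
    p • C.mu m • l = C.mu (p • m) • p • l := by
  simp [C.mu_conj, mul_smul]

/-- The semidirect product `L ⋊ N`, where `N` acts on `L` through `ν`. -/
abbrev SemidirectLN : Type _ := L ⋊[(MulDistribMulAction.toMulAut P L).comp C.nu] N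

/-- The diagonal action of `P` on `L ⋊ N`. -/
def diagonalAction : P →* MulAut C.SemidirectLN where
  toFun p := SemidirectProduct.congr (MulDistribMulAction.toMulAut P L p)
    (MulDistribMulAction.toMulAut P N p) fun n => MulEquiv.ext (C.smul_nu_smul p n)
  map_one' := by ext <;> simp
  map_mul' p p' := by ext <;> simp [mul_smul]

theorem diagonalAction_apply (p : P) (x : C.SemidirectLN) :
    C.diagonalAction p x = ⟨p • x.left, p • x.right⟩ := rfl

theorem smul_mul_mul_h (m : M) (n n' : N) (l l' : L) :
    C.mu m • (l * C.nu n • l') * C.h m (n * n') =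
      (C.mu m • l * C.h m n) * C.nu n • (C.mu m • l' * C.h m n') :=
  calc C.mu m • (l * C.nu n • l') * C.h m (n * n')
    _ = C.mu m • l * (C.mu m • C.nu n • l' * C.h m n) * C.nu n • C.h m n' := by
      simp only [C.h_mul_right_eq_mul_smul, smul_mul', mul_assoc]
    _ = (C.mu m • l * C.h m n) * C.nu n • (C.mu m • l' * C.h m n') := by
      simp only [← C.h_mul_smul_smul, smul_mul', mul_assoc]

/-- The action `ᵐ(l, n) = (ᵐl · h(m, n), n)` of `M` on `L ⋊ N`, which models conjugation by `m`. -/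
def hAction : M →* MulAut C.SemidirectLN :=
  letI : MulDistribMulAction M C.SemidirectLN :=
    { smul m x := ⟨C.mu m • x.left * C.h m x.right, x.right⟩
      one_smul x := SemidirectProduct.ext
        (show C.mu 1 • x.left * C.h 1 x.right = x.left by simp [C.h_one_left]) rfl
      mul_smul m m' x := SemidirectProduct.ext
        (show C.mu (m * m') • x.left * C.h (m * m') x.right =
            C.mu m • (C.mu m' • x.left * C.h m' x.right) * C.h m x.right by
          simp [C.h_mul_left_eq_smul_mul, mul_smul, mul_assoc]) rfl
      smul_one m := SemidirectProduct.ext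
        (show C.mu m • (1 : L) * C.h m 1 = 1 by simp [C.h_one_right]) rfl
      smul_mul m x y := SemidirectProduct.ext (C.smul_mul_mul_h m _ _ _ _) rfl }
  MulDistribMulAction.toMulAut M C.SemidirectLN

theorem hAction_apply (m : M) (x : C.SemidirectLN) :
    C.hAction m x = ⟨C.mu m • x.left * C.h m x.right, x.right⟩ := rfl

theorem diagonalAction_mul_hAction (p : P) (m : M) :
    C.diagonalAction p * C.hAction m = C.hAction (p • m) * C.diagonalAction p := by
  ext x <;> simp [diagonalAction_apply, hAction_apply, C.smul_mu_smul, C.h_equivariant]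

/-- The action of `M ⋊ P` on `L ⋊ N` obtained by gluing the actions of `M` and `P`. -/
def semidirectAction :
    (M ⋊[MulDistribMulAction.toMulAut P M] P) →* MulAut C.SemidirectLN :=
  SemidirectProduct.lift C.hAction C.diagonalAction fun p =>
    MonoidHom.ext fun m => eq_mul_inv_of_mul_eq (C.diagonalAction_mul_hAction p m).symm

theorem semidirectAction_apply (g : M ⋊[MulDistribMulAction.toMulAut P M] P)
    (x : C.SemidirectLN) :
    C.semidirectAction g x =
      ⟨C.mu g.left • g.right • x.left * C.h g.left (g.right • x.right), g.right • x.right⟩ :=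
  rfl

end CrossedSquare

/-- For a crossed square, the formula
`^{(m,p)}(l,n) = (ᵐ(ᵖl)·h(m, ᵖn), ᵖn)` defines an action of `M ⋊ P` on `L ⋊ N`
by group automorphisms. -/
theorem crossed_square_action {L M N P : Type*} [Group L] [Group M] [Group N] [Group P]
    [MulDistribMulAction P L] [MulDistribMulAction P M] [MulDistribMulAction P N]
    (C : CrossedSquare L M N P)
    (σ : (M ⋊[MulDistribMulAction.toMulAut P M] P) →
      (L ⋊[(MulDistribMulAction.toMulAut P L).comp C.nu] N) →
      (L ⋊[(MulDistribMulAction.toMulAut P L).comp C.nu] N))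
    (hσ : ∀ g x, σ g x =
      ⟨(C.mu g.left • (g.right • x.left)) * C.h g.left (g.right • x.right),
        g.right • x.right⟩) :
    (∀ g, Function.Bijective (σ g)) ∧
    (∀ g x y, σ g (x * y) = σ g x * σ g y) ∧
    (∀ g g' x, σ (g * g') x = σ g (σ g' x)) ∧
    (∀ x, σ 1 x = x) := by
  have hσ_eq : ∀ g, σ g = C.semidirectAction g := fun g =>
    funext fun x => (hσ g x).trans (C.semidirectAction_apply g x).symm
  simp only [hσ_eq]
  refine ⟨fun g => (C.semidirectAction g).bijective, fun g => map_mul (C.semidirectAction g),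
    fun g g' x => ?_, fun x => ?_⟩
  · rw [map_mul, MulAut.mul_apply]
  · rw [map_one, MulAut.one_apply]
end

section
/- Let (L,M,N,∂₂,∂₁,{–,–}) be a 2-crossed module. Define m·l := {∂₂(l), m}·l for m ∈ M, l ∈ L. Then this formula defines an action of M on L by group automorphisms (1·l = l, (m·m')·l = m·(m'·l), and m·(l·l') = (m·l)·(m·l')), and with this action (L, M, ∂₂) is a crossed module: ∂₂(m·l) = m·∂₂(l)·m⁻¹ for all m ∈ M, l ∈ L, and ∂₂(l)·l' = l·l'·l⁻¹ for all l, l' ∈ L. -/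
/-- A 2-crossed module of groups `L → M → N` with Peiffer lifting `{-,-} : M × M → L`. -/
structure TwoCrossedModule (L M N : Type*) [Group L] [Group M] [Group N]
    [MulDistribMulAction N M] [MulDistribMulAction N L] where
  d2 : L →* M
  d1 : M →* N
  d1_d2 : ∀ l : L, d1 (d2 l) = 1
  d1_conj : ∀ (n : N) (m : M), d1 (n • m) = n * d1 m * n⁻¹
  d2_equivariant : ∀ (n : N) (l : L), d2 (n • l) = n • d2 l
  pl : M → M → L
  pl_equivariant : ∀ (n : N) (m m' : M), n • pl m m' = pl (n • m) (n • m')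
  cm1 : ∀ m m' : M, d2 (pl m m') = (d1 m • m') * m * m'⁻¹ * m⁻¹
  cm2 : ∀ l l' : L, pl (d2 l) (d2 l') = l' * l * l'⁻¹ * l⁻¹
  cm3i : ∀ m m' m'' : M, pl (m * m') m'' = (d1 m • pl m' m'') * pl m (m' * m'' * m'⁻¹)
  cm3ii : ∀ m m' m'' : M,
    pl m (m' * m'') = pl m m' * pl (d2 (pl m m'')) (m * m' * m⁻¹) * pl m m''
  cm4 : ∀ (m : M) (l : L), pl m (d2 l) * pl (d2 l) m = (d1 m • l) * l⁻¹

/-!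
By (2CM3ii) and (2CM2), multiplying `m` by `∂₂(x)` on the left conjugates `m·l` by `x`. Since
(2CM1) says `m·m'·m⁻¹ = ∂₂({m, m'})⁻¹·(^{∂₁(m)}m')`, replacing `^{∂₁(m)}m'` by `m·m'·m⁻¹` conjugates
the values of the action by `{m, m'}⁻¹`. For `m = ∂₂(l')` this makes (2CM3i) the multiplicativity
of the action; it also turns (2CM3ii) into `{m, m'·m''} = ((^{∂₁(m)}m')·{m, m''})·{m, m'}`, whose
case `m = ∂₂(l)` gives the action law by multiplicativity.
-/

namespace TwoCrossedModule

variable {L M N : Type*} [Group L] [Group M] [Group N]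
  [MulDistribMulAction N M] [MulDistribMulAction N L] (T : TwoCrossedModule L M N)

/-- The operation `m·l := {∂₂(l), m}·l` of `M` on `L`. It is kept as a plain function rather than an
`SMul M L` instance because it depends on the Peiffer lifting `T.pl`. -/
def peifferAct (m : M) (l : L) : L :=
  T.pl (T.d2 l) m * l

theorem pl_one_left (m : M) : T.pl 1 m = 1 := by
  simpa using T.cm3i 1 1 m

theorem pl_one_right (m : M) : T.pl m 1 = 1 := by
  have hd2 : T.d2 (T.pl m 1) = 1 := by simp [T.cm1]
  simpa [hd2, T.pl_one_left] using T.cm3ii m 1 1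

theorem mul_mul_inv_eq_d2_pl_inv_mul (m m' : M) :
    m * m' * m⁻¹ = T.d2 (T.pl m m')⁻¹ * (T.d1 m • m') := by
  rw [map_inv, T.cm1]
  group

theorem peifferAct_one_left (l : L) : T.peifferAct 1 l = l := by
  rw [peifferAct, T.pl_one_right, one_mul]

theorem peifferAct_d2_left (l l' : L) : T.peifferAct (T.d2 l) l' = l * l' * l⁻¹ := by
  rw [peifferAct, T.cm2, inv_mul_cancel_right]

theorem d2_peifferAct (m : M) (l : L) : T.d2 (T.peifferAct m l) = m * T.d2 l * m⁻¹ := by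
  rw [peifferAct, map_mul, T.cm1, T.d1_d2, one_smul, inv_mul_cancel_right]

theorem peifferAct_d2_mul_left (x l : L) (m : M) :
    T.peifferAct (T.d2 x * m) l = x * T.peifferAct m l * x⁻¹ := by
  have hconj : T.d2 l * T.d2 x * (T.d2 l)⁻¹ = T.d2 (l * x * l⁻¹) := by
    simp only [map_mul, map_inv]
  rw [peifferAct, peifferAct, T.cm3ii, hconj, T.cm2, T.cm2]
  group

theorem peifferAct_conj_left (m m' : M) (l : L) :
    T.peifferAct (m * m' * m⁻¹) l =
      (T.pl m m')⁻¹ * T.peifferAct (T.d1 m • m') l * T.pl m m' := by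
  rw [T.mul_mul_inv_eq_d2_pl_inv_mul, T.peifferAct_d2_mul_left, inv_inv]

theorem peifferAct_mul_right (m : M) (l l' : L) :
    T.peifferAct m (l * l') = T.peifferAct m l * T.peifferAct m l' := by
  have hconj := T.peifferAct_conj_left (T.d2 l') m l
  rw [T.d1_d2, one_smul] at hconj
  calc T.peifferAct m (l * l')
      = T.pl (T.d2 l') m * T.peifferAct (T.d2 l' * m * (T.d2 l')⁻¹) l * l' := by
        simp only [peifferAct, map_mul, T.cm3i, T.d1_d2, one_smul, mul_assoc]
    _ = T.peifferAct m l * (T.pl (T.d2 l') m * l') := by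
        rw [hconj]
        group

theorem pl_mul_right (m m' m'' : M) :
    T.pl m (m' * m'') = T.peifferAct (T.d1 m • m') (T.pl m m'') * T.pl m m' :=
  calc T.pl m (m' * m'')
      = T.pl m m' * T.peifferAct (m * m' * m⁻¹) (T.pl m m'') := by
        rw [T.cm3ii, peifferAct, mul_assoc]
    _ = T.peifferAct (T.d1 m • m') (T.pl m m'') * T.pl m m' := by
        rw [T.peifferAct_conj_left]
        group

theorem peifferAct_mul_left (m m' : M) (l : L) :
    T.peifferAct (m * m') l = T.peifferAct m (T.peifferAct m' l) :=
  calc T.peifferAct (m * m') l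
      = T.peifferAct m (T.pl (T.d2 l) m') * T.peifferAct m l := by
        rw [peifferAct, T.pl_mul_right, T.d1_d2, one_smul, mul_assoc, ← peifferAct]
    _ = T.peifferAct m (T.peifferAct m' l) := by
        rw [← T.peifferAct_mul_right, ← peifferAct]

end TwoCrossedModule

/-- In a 2-crossed module `(L,M,N,∂₂,∂₁,{-,-})`, the formula
`m·l := {∂₂(l),m}·l` defines an action of `M` on `L` by group automorphisms, and
with this action `(L,M,∂₂)` is a crossed module. -/
theorem crossed_module_of_two_crossed_module {L M N : Type*}
    [Group L] [Group M] [Group N] [MulDistribMulAction N M] [MulDistribMulAction N L]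
    (T : TwoCrossedModule L M N)
    (act : M → L → L) (hact : ∀ m l, act m l = T.pl (T.d2 l) m * l) :
    (∀ l, act 1 l = l) ∧
    (∀ m m' l, act (m * m') l = act m (act m' l)) ∧
    (∀ m l l', act m (l * l') = act m l * act m l') ∧
    (∀ m l, T.d2 (act m l) = m * T.d2 l * m⁻¹) ∧
    (∀ l l', act (T.d2 l) l' = l * l' * l⁻¹) := by
  obtain rfl : act = T.peifferAct := funext₂ hact
  exact ⟨T.peifferAct_one_left, T.peifferAct_mul_left, T.peifferAct_mul_right,
    T.d2_peifferAct, T.peifferAct_d2_left⟩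
end

section
/- Let (L,M,N,P,λ,λ',μ,ν,h) be a crossed square. Form M ⋊ N where N acts on M via ν (ⁿm := ^{ν(n)}m). Define ∂₂ : L → M ⋊ N by ∂₂(l) = (λ(l)⁻¹, λ'(l)) and ∂₁ : M ⋊ N → P by ∂₁(m,n) = μ(m)·ν(n). Then ∂₂ and ∂₁ are group homomorphisms and ∂₁∘∂₂ is the trivial homomorphism. -/
/-!
Conjugation-equivariance of `μ` is exactly the compatibility that lets `μ` and `ν` be lifted to a
homomorphism `∂₁` on `M ⋊ N`. Inversion makes `l ↦ (λ l)⁻¹` an antihomomorphism; in `M ⋊ N` the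
order is corrected because `λ' l` acts on the image of `λ` as conjugation by `λ l`, which follows
from the Peiffer identity for `μ` and `μ ∘ λ = ν ∘ λ'`. The composite `∂₁ ∘ ∂₂` is
`l ↦ (μ (λ l))⁻¹ * ν (λ' l)`, which is trivial because the square commutes.
-/

section InvPairHom

variable {L M N P : Type*} [Group L] [Group M] [Group N] [Group P]
  {φ : N →* MulAut M} (f : L →* M) (g : L →* N)

/-- The boundary `∂₂ : l ↦ ((f l)⁻¹, g l)` of the mapping cone of a square of groups, for any action
`φ` of `N` on `M` under which `g l` acts on the range of `f` as conjugation by `f l`. -/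
def invPairHom (hfg : ∀ l l', φ (g l) (f l') = f l * f l' * (f l)⁻¹) : L →* M ⋊[φ] N :=
  MonoidHom.mk' (fun l ↦ ⟨(f l)⁻¹, g l⟩) fun l l' ↦ by
    ext
    · calc
        (f (l * l'))⁻¹ = (f l)⁻¹ * (f l * f l' * (f l)⁻¹)⁻¹ := by rw [map_mul]; group
        _ = (f l)⁻¹ * φ (g l) (f l')⁻¹ := by rw [map_inv, hfg]
    · exact map_mul g l l'

theorem lift_comp_invPairHom_eq_one_iff {μ : M →* P} {ν : N →* P}
    (hμν : ∀ n, μ.comp (φ n).toMonoidHom = (MulAut.conj (ν n)).toMonoidHom.comp μ)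
    (hfg : ∀ l l', φ (g l) (f l') = f l * f l' * (f l)⁻¹) :
    (SemidirectProduct.lift μ ν hμν).comp (invPairHom f g hfg) = 1 ↔
      ∀ l, μ (f l) = ν (g l) := by
  refine DFunLike.ext_iff.trans (forall_congr' fun l ↦ ?_)
  change μ (f l)⁻¹ * ν (g l) = 1 ↔ μ (f l) = ν (g l)
  rw [map_inv, inv_mul_eq_one]

end InvPairHom

/-- `μ : M → P` is a crossed module of groups. The action of `P` on `M` is the ambient
`MulDistribMulAction` instance, so being a crossed module is a property of `μ`. -/
structure IsCrossedModule_s7 {M P : Type*} [Group M] [Group P] [MulDistribMulAction P M]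
    (μ : M →* P) : Prop where
  map_smul : ∀ p m, μ (p • m) = p * μ m * p⁻¹
  peiffer : ∀ m m', μ m • m' = m * m' * m⁻¹

theorem CrossedSquare.isCrossedModule_mu {L M N P : Type*} [Group L] [Group M] [Group N] [Group P]
    [MulDistribMulAction P L] [MulDistribMulAction P M] [MulDistribMulAction P N]
    (C : CrossedSquare L M N P) : IsCrossedModule_s7 C.mu :=
  ⟨C.mu_conj, C.mu_peiffer⟩

section IsCrossedModule_s7

variable {L M N P : Type*} [Group L] [Group M] [Group N] [Group P] [MulDistribMulAction P M]
  {lam : L →* M} {lam' : L →* N} {μ : M →* P} {ν : N →* P}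

theorem IsCrossedModule_s7.comp_toMulAut (hμ : IsCrossedModule_s7 μ) (p : P) :
    μ.comp (MulDistribMulAction.toMulAut P M p).toMonoidHom =
      (MulAut.conj p).toMonoidHom.comp μ :=
  MonoidHom.ext (hμ.map_smul p)

theorem IsCrossedModule_s7.smul_eq_conj_of_comm (hμ : IsCrossedModule_s7 μ)
    (comm : ∀ l, μ (lam l) = ν (lam' l)) (l : L) (m : M) :
    ν (lam' l) • m = lam l * m * (lam l)⁻¹ := by
  rw [← comm, hμ.peiffer]

theorem mapping_cone_complex_general (hμ : IsCrossedModule_s7 μ)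
    (comm : ∀ l, μ (lam l) = ν (lam' l)) :
    (∀ l l' : L,
      (⟨(lam (l * l'))⁻¹, lam' (l * l')⟩ : M ⋊[(MulDistribMulAction.toMulAut P M).comp ν] N) =
        (⟨(lam l)⁻¹, lam' l⟩ : M ⋊[(MulDistribMulAction.toMulAut P M).comp ν] N) *
        ⟨(lam l')⁻¹, lam' l'⟩) ∧
    (∀ x y : M ⋊[(MulDistribMulAction.toMulAut P M).comp ν] N,
      μ (x * y).left * ν (x * y).right = (μ x.left * ν x.right) * (μ y.left * ν y.right)) ∧
    (∀ l : L, μ (lam l)⁻¹ * ν (lam' l) = 1) := by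
  let φ := (MulDistribMulAction.toMulAut P M).comp ν
  have conj (l l' : L) : φ (lam' l) (lam l') = lam l * lam l' * (lam l)⁻¹ :=
    hμ.smul_eq_conj_of_comm comm l (lam l')
  let d₂ : L →* M ⋊[φ] N := invPairHom lam lam' conj
  let d₁ : M ⋊[φ] N →* P := SemidirectProduct.lift μ ν fun n ↦ hμ.comp_toMulAut (ν n)
  have d₁_comp_d₂ : d₁.comp d₂ = 1 := (lift_comp_invPairHom_eq_one_iff lam lam' _ conj).2 comm
  exact ⟨map_mul d₂, map_mul d₁, DFunLike.congr_fun d₁_comp_d₂⟩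

end IsCrossedModule_s7

/-- For a crossed square `(L,M,N,P,λ,λ',μ,ν,h)`, the maps
`∂₂ : L → M ⋊ N`, `∂₂(l) = (λ(l)⁻¹, λ'(l))` and `∂₁ : M ⋊ N → P`,
`∂₁(m,n) = μ(m)·ν(n)` are group homomorphisms with `∂₁∘∂₂` trivial
(`N` acting on `M` via `ν`). -/
theorem mapping_cone_complex {L M N P : Type*} [Group L] [Group M] [Group N] [Group P]
    [MulDistribMulAction P L] [MulDistribMulAction P M] [MulDistribMulAction P N]
    (C : CrossedSquare L M N P) :
    (∀ l l' : L,
      (⟨(C.lam (l * l'))⁻¹, C.lam' (l * l')⟩ :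
          M ⋊[(MulDistribMulAction.toMulAut P M).comp C.nu] N) =
        (⟨(C.lam l)⁻¹, C.lam' l⟩ :
          M ⋊[(MulDistribMulAction.toMulAut P M).comp C.nu] N) *
        ⟨(C.lam l')⁻¹, C.lam' l'⟩) ∧
    (∀ x y : M ⋊[(MulDistribMulAction.toMulAut P M).comp C.nu] N,
      C.mu ((x * y).left) * C.nu ((x * y).right) =
        (C.mu x.left * C.nu x.right) * (C.mu y.left * C.nu y.right)) ∧
    (∀ l : L, C.mu (C.lam l)⁻¹ * C.nu (C.lam' l) = 1) :=
  mapping_cone_complex_general C.isCrossedModule_mu C.comm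
end

section
/- Let μ : M → P and ν : N → P be crossed modules over the same group P. Form M ⋊ N where N acts on M via ν (ⁿm := ^{ν(n)}m), let P act on M ⋊ N componentwise (ᵖ(m,n) = (ᵖm, ᵖn)), and let ∂₁ : M ⋊ N → P be ∂₁(m,n) = μ(m)·ν(n). Then for all x = (m,n) and y = (c,a) in M ⋊ N, the Peiffer commutator ⟨x,y⟩ = (^{∂₁(x)}y)·x·y⁻¹·x⁻¹ equals ((^{ν(n·a·n⁻¹)}m)·m⁻¹, ^{μ(m)}(n·a·n⁻¹)·(n·a⁻¹·n⁻¹)); in particular ⟨x,y⟩ does not depend on the first coordinate c of y. -/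
/-!
Write `x = (m, n)`, `y = (c, a)` and `p = ∂₁ x`. By the Peiffer identity of `μ`, conjugation by any
`z : M ⋊ N` acts on the normal subgroup `M` as `∂₁ z` does, and `p • y` acts as `p * ∂₁ y * p⁻¹`.
So every Peiffer commutator acts trivially on `M`, that is, it centralizes `M`. Since `p • c` is
the conjugate `x c x⁻¹`, the commutator `⟨x, y⟩` is the conjugate of `⟨x, a⟩` by the element
`x c x⁻¹` of `M`, hence equal to it. Conjugating `⟨x, a⟩` by `m⁻¹`, which again does not change it,
cancels the last factor `m⁻¹` and leaves `m⁻¹ (p • a) m (n a n⁻¹)⁻¹`.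
-/

/-- The Peiffer commutator `⟨x, y⟩` with respect to `d`, whose triviality is the Peiffer identity.
Here `d` is any function, since the boundary of `M ⋊ N` need not be a homomorphism unless `μ` is
equivariant. -/
def peifferCommutator {G P : Type*} [Group G] [SMul P G] (d : G → P) (x y : G) : G :=
  d x • y * x * y⁻¹ * x⁻¹

/-- The semidirect product `M ⋊ N` in which `N` acts on the `P`-group `M` through `ν : N →* P`. -/
abbrev SemidirectVia (M : Type*) {N P : Type*} [Group M] [Group N] [Group P]
    [MulDistribMulAction P M] (ν : N →* P) : Type _ :=
  M ⋊[(MulDistribMulAction.toMulAut P M).comp ν] N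

namespace SemidirectVia

open SemidirectProduct

variable {M N P : Type*} [Group M] [Group N] [Group P] [MulDistribMulAction P M]

/-- The boundary map `∂₁ (m, n) = μ m * ν n` of `M ⋊ N`. -/
def boundary (μ : M →* P) (ν : N →* P) (x : SemidirectVia M ν) : P :=
  μ x.left * ν x.right

/-- The componentwise action of `P` on `M ⋊ N`. Only the scalar multiplication is recorded: it acts
by automorphisms when `ν` is equivariant. -/
instance [MulDistribMulAction P N] (ν : N →* P) : SMul P (SemidirectVia M ν) where
  smul p x := ⟨p • x.left, p • x.right⟩

theorem smul_left [MulDistribMulAction P N] {ν : N →* P} (p : P) (x : SemidirectVia M ν) :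
    (p • x).left = p • x.left :=
  rfl

theorem smul_right [MulDistribMulAction P N] {ν : N →* P} (p : P) (x : SemidirectVia M ν) :
    (p • x).right = p • x.right :=
  rfl

variable {μ : M →* P} {ν : N →* P}

theorem boundary_smul_eq (hμpeiffer : ∀ m m' : M, μ m • m' = m * m' * m⁻¹)
    (x : SemidirectVia M ν) (c : M) :
    boundary μ ν x • c = x.left * ν x.right • c * x.left⁻¹ := by
  rw [boundary, mul_smul, hμpeiffer]

theorem semiconjBy_inl (hμpeiffer : ∀ m m' : M, μ m • m' = m * m' * m⁻¹)
    (x : SemidirectVia M ν) (c : M) :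
    SemiconjBy x (inl c) (inl (boundary μ ν x • c)) := by
  ext <;> simp [boundary_smul_eq hμpeiffer]

variable [MulDistribMulAction P N]

theorem boundary_smul_smul (hμpeiffer : ∀ m m' : M, μ m • m' = m * m' * m⁻¹)
    (hνconj : ∀ (p : P) (n : N), ν (p • n) = p * ν n * p⁻¹)
    (p : P) (y : SemidirectVia M ν) (c : M) :
    boundary μ ν (p • y) • c = (p * boundary μ ν y * p⁻¹) • c := by
  simp only [boundary_smul_eq hμpeiffer, mul_smul, smul_left, smul_right, hνconj, smul_mul',
    smul_inv']

theorem commute_peifferCommutator_inl (hμpeiffer : ∀ m m' : M, μ m • m' = m * m' * m⁻¹)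
    (hνconj : ∀ (p : P) (n : N), ν (p • n) = p * ν n * p⁻¹)
    (x y : SemidirectVia M ν) (c : M) :
    Commute (peifferCommutator (boundary μ ν) x y) (inl c) := by
  set p := boundary μ ν x
  set q := boundary μ ν y
  have inv_inl (z : SemidirectVia M ν) (c : M) :
      SemiconjBy z⁻¹ (inl c) (inl ((boundary μ ν z)⁻¹ • c)) := by
    simpa using (semiconjBy_inl hμpeiffer z ((boundary μ ν z)⁻¹ • c)).inv_symm_left
  have hxy : SemiconjBy (p • y * x * y⁻¹ * x⁻¹) (inl c)
      (inl (boundary μ ν (p • y) • p • q⁻¹ • p⁻¹ • c)) :=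
    (((semiconjBy_inl hμpeiffer _ _).mul_left (semiconjBy_inl hμpeiffer x _)).mul_left
      (inv_inl y _)).mul_left (inv_inl x c)
  have boundary_cancel : boundary μ ν (p • y) • p • q⁻¹ • p⁻¹ • c = c := by
    simp [boundary_smul_smul hμpeiffer hνconj, mul_smul, q]
  rwa [boundary_cancel] at hxy

theorem peifferCommutator_eq_peifferCommutator_inr
    (hμpeiffer : ∀ m m' : M, μ m • m' = m * m' * m⁻¹)
    (hνconj : ∀ (p : P) (n : N), ν (p • n) = p * ν n * p⁻¹) (x y : SemidirectVia M ν) :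
    peifferCommutator (boundary μ ν) x y =
      peifferCommutator (boundary μ ν) x (inr y.right) := by
  set p := boundary μ ν x
  have smul_eq : p • y = inl (p • y.left) * p • (inr y.right : SemidirectVia M ν) := by
    ext <;> simp [smul_left, smul_right]
  have conj_eq : x * inl y.left * x⁻¹ = inl (p • y.left) :=
    mul_inv_eq_of_eq_mul (semiconjBy_inl hμpeiffer x y.left).eq
  calc p • y * x * y⁻¹ * x⁻¹
      = inl (p • y.left) * p • (inr y.right : SemidirectVia M ν) * x *
          (inl y.left * inr y.right)⁻¹ * x⁻¹ := by
        rw [smul_eq, inl_left_mul_inr_right]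
    _ = inl (p • y.left) * peifferCommutator (boundary μ ν) x (inr y.right) *
          (x * inl y.left * x⁻¹)⁻¹ := by
        simp only [peifferCommutator, p]; group
    _ = inl (p • y.left) * peifferCommutator (boundary μ ν) x (inr y.right) *
          (inl (p • y.left))⁻¹ := by
        rw [conj_eq]
    _ = peifferCommutator (boundary μ ν) x (inr y.right) :=
        (commute_peifferCommutator_inl hμpeiffer hνconj x _ _).symm.mul_inv_cancel

theorem peifferCommutator_inr (hμpeiffer : ∀ m m' : M, μ m • m' = m * m' * m⁻¹)
    (hνconj : ∀ (p : P) (n : N), ν (p • n) = p * ν n * p⁻¹)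
    (hνpeiffer : ∀ n n' : N, ν n • n' = n * n' * n⁻¹) (x : SemidirectVia M ν) (a : N) :
    peifferCommutator (boundary μ ν) x (inr a) =
      ⟨ν (x.right * a * x.right⁻¹) • x.left * x.left⁻¹,
        μ x.left • (x.right * a * x.right⁻¹) * (x.right * a⁻¹ * x.right⁻¹)⟩ := by
  obtain ⟨m, n⟩ := x
  set b := n * a * n⁻¹ with hb
  have inv_b : b⁻¹ = n * a⁻¹ * n⁻¹ := conj_inv
  have smul_inr : boundary μ ν ⟨m, n⟩ • (inr a : SemidirectVia M ν) = inr (μ m • b) := by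
    ext <;> simp [smul_left, smul_right, boundary, mul_smul, hνpeiffer, b]
  have smul_left_eq : ν (μ m • b) • m = m * ν b • m * m⁻¹ := by
    simp only [hνconj, mul_smul, ← map_inv, hμpeiffer]
    simp
  calc peifferCommutator (boundary μ ν) ⟨m, n⟩ (inr a)
      = (inl m)⁻¹ * peifferCommutator (boundary μ ν) ⟨m, n⟩ (inr a) * inl m :=
        ((commute_peifferCommutator_inl hμpeiffer hνconj _ _ m).symm.inv_mul_cancel).symm
    _ = (inl m)⁻¹ * inr (μ m • b) * inl m * (inr b)⁻¹ := by
        rw [peifferCommutator, smul_inr, mk_eq_inl_mul_inr, hb]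
        simp only [map_mul, map_inv]
        group
    _ = ⟨ν b • m * m⁻¹, μ m • b * (n * a⁻¹ * n⁻¹)⟩ := by
        rw [← inv_b]
        ext <;> simp [smul_left_eq, mul_assoc]

end SemidirectVia

open SemidirectVia in
theorem peiffer_commutator_semidirect_general {M N P : Type*} [Group M] [Group N] [Group P]
    [MulDistribMulAction P M] [MulDistribMulAction P N]
    (μ : M →* P) (ν : N →* P)
    (hμpeiffer : ∀ m m' : M, μ m • m' = m * m' * m⁻¹)
    (hνconj : ∀ (p : P) (n : N), ν (p • n) = p * ν n * p⁻¹)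
    (hνpeiffer : ∀ n n' : N, ν n • n' = n * n' * n⁻¹)
    (m c : M) (n a : N) :
    peifferCommutator (boundary μ ν) ⟨m, n⟩ ⟨c, a⟩ =
      ⟨ν (n * a * n⁻¹) • m * m⁻¹, μ m • (n * a * n⁻¹) * (n * a⁻¹ * n⁻¹)⟩ :=
  (peifferCommutator_eq_peifferCommutator_inr hμpeiffer hνconj _ _).trans
    (peifferCommutator_inr hμpeiffer hνconj hνpeiffer _ _)

/-- For crossed modules `μ : M → P`, `ν : N → P`, with
`∂₁(m,n) = μ(m)·ν(n)` on `M ⋊ N` (`N` acting on `M` via `ν`) and `P` acting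
componentwise, the Peiffer commutator of `x = (m,n)` and `y = (c,a)` equals
`((^{ν(n·a·n⁻¹)}m)·m⁻¹, ^{μ(m)}(n·a·n⁻¹)·(n·a⁻¹·n⁻¹))`; in particular it does not
depend on `c`. -/
theorem peiffer_commutator_semidirect {M N P : Type*} [Group M] [Group N] [Group P]
    [MulDistribMulAction P M] [MulDistribMulAction P N]
    (μ : M →* P) (ν : N →* P)
    (hμconj : ∀ (p : P) (m : M), μ (p • m) = p * μ m * p⁻¹)
    (hμpeiffer : ∀ m m' : M, μ m • m' = m * m' * m⁻¹)
    (hνconj : ∀ (p : P) (n : N), ν (p • n) = p * ν n * p⁻¹)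
    (hνpeiffer : ∀ n n' : N, ν n • n' = n * n' * n⁻¹)
    (m c : M) (n a : N) :
    ((⟨(μ m * ν n) • c, (μ m * ν n) • a⟩ :
        M ⋊[(MulDistribMulAction.toMulAut P M).comp ν] N) *
      ⟨m, n⟩ * (⟨c, a⟩ : M ⋊[(MulDistribMulAction.toMulAut P M).comp ν] N)⁻¹ *
      (⟨m, n⟩ : M ⋊[(MulDistribMulAction.toMulAut P M).comp ν] N)⁻¹ =
      ⟨(ν (n * a * n⁻¹) • m) * m⁻¹, (μ m • (n * a * n⁻¹)) * (n * a⁻¹ * n⁻¹)⟩) ∧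
    (∀ c' : M,
      (⟨(μ m * ν n) • c, (μ m * ν n) • a⟩ :
          M ⋊[(MulDistribMulAction.toMulAut P M).comp ν] N) *
        ⟨m, n⟩ * (⟨c, a⟩ : M ⋊[(MulDistribMulAction.toMulAut P M).comp ν] N)⁻¹ *
        (⟨m, n⟩ : M ⋊[(MulDistribMulAction.toMulAut P M).comp ν] N)⁻¹ =
      (⟨(μ m * ν n) • c', (μ m * ν n) • a⟩ :
          M ⋊[(MulDistribMulAction.toMulAut P M).comp ν] N) *
        ⟨m, n⟩ * (⟨c', a⟩ : M ⋊[(MulDistribMulAction.toMulAut P M).comp ν] N)⁻¹ *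
        (⟨m, n⟩ : M ⋊[(MulDistribMulAction.toMulAut P M).comp ν] N)⁻¹) :=
  have formula (c : M) :=
    peiffer_commutator_semidirect_general μ ν hμpeiffer hνconj hνpeiffer m c n a
  ⟨formula c, fun c' ↦ (formula c).trans (formula c').symm⟩
end

section
/- Let (L,M,N,P,λ,λ',μ,ν,h) be a crossed square, and form its mapping cone L → M ⋊ N → P with ∂₂(l) = (λ(l)⁻¹, λ'(l)), ∂₁(m,n) = μ(m)·ν(n), where N acts on M via ν. Define the Peiffer lifting {(m,n),(c,a)} := h(m, n·a·n⁻¹). Then axiom 2CM1 holds: for all x, y ∈ M ⋊ N, ∂₂({x,y}) = (^{∂₁(x)}y)·x·y⁻¹·x⁻¹ in M ⋊ N, where P acts on M ⋊ N componentwise. -/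
/-- The Peiffer lifting `{(m,n),(c,a)} = h(m, n·a·n⁻¹)` on the mapping cone of a
crossed square. -/
def CrossedSquare.plift {L M N P : Type*} [Group L] [Group M] [Group N] [Group P]
    [MulDistribMulAction P L] [MulDistribMulAction P M] [MulDistribMulAction P N]
    (C : CrossedSquare L M N P)
    (x y : M ⋊[(MulDistribMulAction.toMulAut P M).comp C.nu] N) : L :=
  C.h x.left (x.right * y.right * x.right⁻¹)

/-- The boundary `∂₂(l) = (λ(l)⁻¹, λ'(l))` of the mapping cone of a crossed square. -/
def CrossedSquare.cone2 {L M N P : Type*} [Group L] [Group M] [Group N] [Group P]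
    [MulDistribMulAction P L] [MulDistribMulAction P M] [MulDistribMulAction P N]
    (C : CrossedSquare L M N P) (l : L) :
    M ⋊[(MulDistribMulAction.toMulAut P M).comp C.nu] N :=
  ⟨(C.lam l)⁻¹, C.lam' l⟩

open SemidirectProduct

namespace CrossedSquare

variable {L M N P : Type*} [Group L] [Group M] [Group N] [Group P]
  [MulDistribMulAction P L] [MulDistribMulAction P M] [MulDistribMulAction P N]

/-- The middle group `M ⋊ N` of the mapping cone of a crossed square, with `N` acting on `M`
through `ν`. It is reducible, so that the API of `SemidirectProduct` applies to it. -/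
abbrev MappingCone (C : CrossedSquare L M N P) : Type _ :=
  M ⋊[(MulDistribMulAction.toMulAut P M).comp C.nu] N

variable (C : CrossedSquare L M N P)

/-- The componentwise action of `P` on the middle group of the mapping cone. -/
instance : MulDistribMulAction P C.MappingCone where
  smul p y := ⟨p • y.left, p • y.right⟩
  one_smul y := SemidirectProduct.ext (one_smul P y.left) (one_smul P y.right)
  mul_smul p q y := SemidirectProduct.ext (mul_smul p q y.left) (mul_smul p q y.right)
  smul_one p := SemidirectProduct.ext (smul_one p) (smul_one p)
  smul_mul p y z := by
    apply SemidirectProduct.ext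
    · change p • (y.left * C.nu y.right • z.left) =
        p • y.left * C.nu (p • y.right) • p • z.left
      simp only [smul_mul', C.nu_conj, mul_smul, inv_smul_smul]
    · exact smul_mul' p y.right z.right

theorem smul_inl (p : P) (m : M) : p • (inl m : C.MappingCone) = inl (p • m) :=
  SemidirectProduct.ext rfl (smul_one p)

theorem smul_inr (p : P) (n : N) : p • (inr n : C.MappingCone) = inr (p • n) :=
  SemidirectProduct.ext (smul_one p) rfl

theorem inr_mul_inl (n : N) (m : M) :
    (inr n * inl m : C.MappingCone) = inl (C.nu n • m) * inr n := by
  rw [← mul_inv_eq_iff_eq_mul, ← map_inv]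
  exact (inl_aut n m).symm

theorem mu_smul_inl (m c : M) :
    C.mu m • (inl c : C.MappingCone) = inl m * inl c * (inl m)⁻¹ := by
  simp only [smul_inl, C.mu_peiffer, map_mul, map_inv]

theorem nu_smul_eq_conj (n : N) (y : C.MappingCone) :
    C.nu n • y = inr n * y * (inr n)⁻¹ := by
  obtain ⟨c, a, rfl⟩ : ∃ c a, y = inl c * inr a := ⟨_, _, (inl_left_mul_inr_right y).symm⟩
  rw [smul_mul', smul_inl, smul_inr, C.nu_peiffer, ← mul_assoc (inr n), inr_mul_inl]
  simp only [map_mul, map_inv, mul_assoc]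

theorem cone2_eq_inl_mul_inr (l : L) : C.cone2 l = inl (C.lam l)⁻¹ * inr (C.lam' l) :=
  mk_eq_inl_mul_inr _ _

theorem commute_cone2_inl (l : L) (c : M) : Commute (C.cone2 l) (inl c) := by
  have conj_lam : C.nu (C.lam' l) • c = C.lam l * c * (C.lam l)⁻¹ := by
    rw [← C.comm, C.mu_peiffer]
  calc C.cone2 l * inl c = inl (C.lam l)⁻¹ * (inl (C.nu (C.lam' l) • c) * inr (C.lam' l)) := by
        rw [cone2_eq_inl_mul_inr, mul_assoc, inr_mul_inl]
    _ = inl c * C.cone2 l := by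
        rw [conj_lam, cone2_eq_inl_mul_inr]
        simp only [map_mul, map_inv]
        group

theorem cone2_eq_inr_mul_inl (l : L) : C.cone2 l = inr (C.lam' l) * inl (C.lam l)⁻¹ := by
  have h_comm := (C.commute_cone2_inl l (C.lam l)).eq
  rw [map_inv, eq_mul_inv_iff_mul_eq, h_comm, cone2_eq_inl_mul_inr, map_inv, mul_inv_cancel_left]

theorem cone2_h (m : M) (b : N) :
    C.cone2 (C.h m b) = C.mu m • inr b * inl m * (inr b)⁻¹ * (inl m)⁻¹ := by
  calc C.cone2 (C.h m b) = inr (C.mu m • b * b⁻¹) * inl (C.nu b • m * m⁻¹) := by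
        rw [cone2_eq_inr_mul_inl, C.lam'_h, C.lam_h, mul_inv_rev, inv_inv]
    _ = inr (C.mu m • b) * (inr b)⁻¹ * (inl (C.nu b • m) * inr b) * (inr b)⁻¹ * (inl m)⁻¹ := by
        simp only [map_mul, map_inv]
        group
    _ = C.mu m • inr b * inl m * (inr b)⁻¹ * (inl m)⁻¹ := by
        rw [← inr_mul_inl, smul_inr, mul_assoc (inr _), inv_mul_cancel_left]

theorem cone2_h_right (m : M) (z : C.MappingCone) :
    C.cone2 (C.h m z.right) = C.mu m • z * inl m * z⁻¹ * (inl m)⁻¹ := by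
  obtain ⟨d, b, rfl⟩ : ∃ d b, z = inl d * inr b := ⟨_, _, (inl_left_mul_inr_right z).symm⟩
  let g : C.MappingCone := inl (m * d * m⁻¹)
  calc C.cone2 (C.h m (inl d * inr b : C.MappingCone).right) = C.cone2 (C.h m b) := by
        rw [mul_right, right_inl, right_inr, one_mul]
    _ = g * C.cone2 (C.h m b) * g⁻¹ :=
        eq_mul_inv_of_mul_eq (C.commute_cone2_inl _ _).eq
    _ = C.mu m • (inl d * inr b) * inl m * (inl d * inr b)⁻¹ * (inl m)⁻¹ := by
        rw [cone2_h, smul_mul', mu_smul_inl]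
        simp only [g, map_mul, map_inv]
        group

theorem plift_eq_h_nu_smul (x y : C.MappingCone) :
    C.plift x y = C.h x.left (C.nu x.right • y).right :=
  congrArg (C.h x.left) (C.nu_peiffer x.right y.right).symm

end CrossedSquare

/-- Axiom 2CM1 for the mapping cone of a crossed square:
`∂₂({x,y}) = (^{∂₁(x)}y)·x·y⁻¹·x⁻¹`, where `{(m,n),(c,a)} = h(m,n·a·n⁻¹)`,
`∂₂(l) = (λ(l)⁻¹,λ'(l))`, `∂₁(m,n) = μ(m)·ν(n)` and `P` acts componentwise. -/
theorem mapping_cone_2CM1 {L M N P : Type*} [Group L] [Group M] [Group N] [Group P]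
    [MulDistribMulAction P L] [MulDistribMulAction P M] [MulDistribMulAction P N]
    (C : CrossedSquare L M N P)
    (x y : M ⋊[(MulDistribMulAction.toMulAut P M).comp C.nu] N) :
    C.cone2 (C.plift x y) =
      (⟨(C.mu x.left * C.nu x.right) • y.left, (C.mu x.left * C.nu x.right) • y.right⟩ :
        M ⋊[(MulDistribMulAction.toMulAut P M).comp C.nu] N) * x * y⁻¹ * x⁻¹ := by
  change C.cone2 (C.plift x y) = (C.mu x.left * C.nu x.right) • y * x * y⁻¹ * x⁻¹
  calc C.cone2 (C.plift x y)
      = C.mu x.left • C.nu x.right • y * inl x.left * (C.nu x.right • y)⁻¹ * (inl x.left)⁻¹ := by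
        rw [C.plift_eq_h_nu_smul, C.cone2_h_right]
    _ = (C.mu x.left * C.nu x.right) • y * (inl x.left * inr x.right) * y⁻¹ *
          (inl x.left * inr x.right)⁻¹ := by
        rw [mul_smul, ← smul_inv', C.nu_smul_eq_conj x.right y⁻¹]
        group
    _ = (C.mu x.left * C.nu x.right) • y * x * y⁻¹ * x⁻¹ := by
        rw [inl_left_mul_inr_right]
end

section
/- Let (L,M,N,P,λ,λ',μ,ν,h) be a crossed square, with mapping cone ∂₂ : L → M ⋊ N, ∂₂(l) = (λ(l)⁻¹, λ'(l)) (N acting on M via ν) and Peiffer lifting {(m,n),(c,a)} := h(m, n·a·n⁻¹). Then axiom 2CM2 holds: for all l₀, l₁ ∈ L, {∂₂(l₀), ∂₂(l₁)} = l₁·l₀·l₁⁻¹·l₀⁻¹; equivalently, h(λ(l₀)⁻¹, λ'(l₀·l₁·l₀⁻¹)) = [l₁, l₀]. -/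
open scoped commutatorElement

namespace CrossedSquare

variable {L M N P : Type*} [Group L] [Group M] [Group N] [Group P]
  [MulDistribMulAction P L] [MulDistribMulAction P M] [MulDistribMulAction P N]
  (C : CrossedSquare L M N P)

theorem h_lam_lam' (l l' : L) : C.h (C.lam l) (C.lam' l') = ⁅l, l'⁆ := by
  rw [C.h_lam', C.mulam_peiffer, commutatorElement_def]

theorem plift_cone2_right (x : M ⋊[(MulDistribMulAction.toMulAut P M).comp C.nu] N) (l : L) :
    C.plift x (C.cone2 l) = C.h x.left (C.lam' (C.nu x.right • l)) := by
  rw [C.lam'_conj]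
  rfl

theorem plift_cone2_cone2 (l₀ l₁ : L) :
    C.plift (C.cone2 l₀) (C.cone2 l₁) = C.h (C.lam l₀)⁻¹ (C.lam' (l₀ * l₁ * l₀⁻¹)) := by
  rw [plift_cone2_right, cone2, C.lam'_peiffer]

end CrossedSquare

/-- Axiom 2CM2 for the mapping cone of a crossed square:
`{∂₂(l₀), ∂₂(l₁)} = l₁·l₀·l₁⁻¹·l₀⁻¹`, i.e.
`h(λ(l₀)⁻¹, λ'(l₀·l₁·l₀⁻¹)) = [l₁,l₀]`. -/
theorem mapping_cone_2CM2 {L M N P : Type*} [Group L] [Group M] [Group N] [Group P]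
    [MulDistribMulAction P L] [MulDistribMulAction P M] [MulDistribMulAction P N]
    (C : CrossedSquare L M N P) (l₀ l₁ : L) :
    C.plift (C.cone2 l₀) (C.cone2 l₁) = l₁ * l₀ * l₁⁻¹ * l₀⁻¹ ∧
    C.h (C.lam l₀)⁻¹ (C.lam' (l₀ * l₁ * l₀⁻¹)) = l₁ * l₀ * l₁⁻¹ * l₀⁻¹ := by
  have h_eq_commutator :
      C.h (C.lam l₀)⁻¹ (C.lam' (l₀ * l₁ * l₀⁻¹)) = l₁ * l₀ * l₁⁻¹ * l₀⁻¹ := calc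
    C.h (C.lam l₀)⁻¹ (C.lam' (l₀ * l₁ * l₀⁻¹)) = ⁅l₀⁻¹, l₀ * l₁ * l₀⁻¹⁆ := by
      rw [← map_inv, C.h_lam_lam']
    _ = l₁ * l₀ * l₁⁻¹ * l₀⁻¹ := by
      rw [commutatorElement_def]
      group
  exact ⟨(C.plift_cone2_cone2 l₀ l₁).trans h_eq_commutator, h_eq_commutator⟩
end

section
/- Let (L,M,N,P,λ,λ',μ,ν,h) be a crossed square. Define functions d₀¹, d₁¹ : N × M × P → P by d₀¹(n,m,p) = ν(n)·μ(m)·p and d₁¹(n,m,p) = p; s₀⁰ : P → N × M × P by s₀⁰(p) = (1,1,p); d₀², d₁², d₂² : L × N × M × N × M × P → N × M × P by d₀²(l,n,m₁,n₁,m₂,p) = (n₁, λ(l)·(^{ν(n)}m₁), ν(n)·μ(m₂)·p), d₁²(l,n,m₁,n₁,m₂,p) = (n₁·λ'(l)·n, m₁·m₂, p), d₂²(l,n,m₁,n₁,m₂,p) = (n, m₂, p); and s₀¹, s₁¹ : N × M × P → L × N × M × N × M × P by s₀¹(n,m,p) = (1,1,m,n,1,p) and s₁¹(n,m,p) = (1,n,1,1,m,p).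 Then the truncated simplicial identities hold: d₀²∘s₀¹ = id, d₁²∘s₀¹ = id, d₁²∘s₁¹ = id, d₂²∘s₁¹ = id, d₂²∘s₀¹ = s₀⁰∘d₁¹, d₀¹∘d₁² = d₀¹∘d₀², and d₁¹∘d₁² = d₁¹∘d₂². -/
/-!
Six of the seven identities compare coordinates by at most a unit law. For `d₀¹ ∘ d₁² = d₀¹ ∘ d₀²`,
`ν ∘ λ' = μ ∘ λ` lets `λ' l` cross from `N` to `M`, and equivariance of `μ` moves `ν n` past `μ m₁`
at the cost of letting it act on `m₁`: `ν n * μ m₁ = μ (ν n • m₁) * ν n`.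
-/

/-- A commutative square of monoids `μ ∘ λ = ν ∘ λ'` in which `μ : M → P` is a pre-crossed module,
that is, equivariant for the conjugation of `P` on itself. It carries the face and degeneracy
maps below between `P`, `N × M × P` and `L × N × M × N × M × P`, in degrees `0`, `1` and `2`.
Equivariance is written without inverses so that it makes sense in monoids. -/
structure PrecrossedSquare (L M N P : Type*) [Monoid L] [Monoid M] [Monoid N] [Monoid P]
    [MulAction P M] where
  lam : L →* M
  lam' : L →* N
  mu : M →* P
  nu : N →* P
  mu_lam : ∀ l : L, mu (lam l) = nu (lam' l)
  mu_smul_mul : ∀ (p : P) (m : M), mu (p • m) * p = p * mu m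

/-- The commutative square underlying a crossed square, with the pre-crossed module `μ`. -/
def CrossedSquare.toPrecrossedSquare {L M N P : Type*} [Group L] [Group M] [Group N] [Group P]
    [MulDistribMulAction P L] [MulDistribMulAction P M] [MulDistribMulAction P N]
    (C : CrossedSquare L M N P) : PrecrossedSquare L M N P where
  lam := C.lam
  lam' := C.lam'
  mu := C.mu
  nu := C.nu
  mu_lam := C.comm
  mu_smul_mul p m := by rw [C.mu_conj, inv_mul_cancel_right]

namespace PrecrossedSquare

section Coordinates

variable {L M N P : Type*}

/-- The face map `d₁¹` from degree `1` to degree `0`. -/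
def d11 : N × M × P → P :=
  fun (_, _, p) ↦ p

/-- The face map `d₂²` from degree `2` to degree `1`. -/
def d22 : L × N × M × N × M × P → N × M × P :=
  fun (_, n, _, _, m₂, p) ↦ (n, m₂, p)

/-- The degeneracy map `s₀⁰` from degree `0` to degree `1`. -/
def s00 [One M] [One N] : P → N × M × P :=
  fun p ↦ (1, 1, p)

variable [One L] [One M] [One N]

/-- The degeneracy map `s₀¹` from degree `1` to degree `2`. -/
def s01 : N × M × P → L × N × M × N × M × P :=
  fun (n, m, p) ↦ (1, 1, m, n, 1, p)

/-- The degeneracy map `s₁¹` from degree `1` to degree `2`. -/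
def s11 : N × M × P → L × N × M × N × M × P :=
  fun (n, m, p) ↦ (1, n, 1, 1, m, p)

theorem d22_comp_s11 : d22 (L := L) (M := M) (N := N) (P := P) ∘ s11 = id := rfl

theorem d22_comp_s01 : d22 (L := L) (M := M) (N := N) (P := P) ∘ s01 = s00 ∘ d11 := rfl

end Coordinates

variable {L M N P : Type*} [Monoid L] [Monoid M] [Monoid N] [Monoid P] [MulAction P M]
  (S : PrecrossedSquare L M N P)

/-- The face map `d₀¹` from degree `1` to degree `0`. -/
def d01 : N × M × P → P :=
  fun (n, m, p) ↦ S.nu n * S.mu m * p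

/-- The face map `d₀²` from degree `2` to degree `1`. -/
def d02 : L × N × M × N × M × P → N × M × P :=
  fun (l, n, m₁, n₁, m₂, p) ↦ (n₁, S.lam l * (S.nu n • m₁), S.nu n * S.mu m₂ * p)

/-- The face map `d₁²` from degree `2` to degree `1`. -/
def d12 : L × N × M × N × M × P → N × M × P :=
  fun (l, n, m₁, n₁, m₂, p) ↦ (n₁ * S.lam' l * n, m₁ * m₂, p)

theorem d02_comp_s01 : S.d02 ∘ s01 = id := by
  ext1 ⟨n, m, p⟩
  simp [d02, s01]

theorem d12_comp_s01 : S.d12 ∘ s01 = id := by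
  ext1 ⟨n, m, p⟩
  simp [d12, s01]

theorem d12_comp_s11 : S.d12 ∘ s11 = id := by
  ext1 ⟨n, m, p⟩
  simp [d12, s11]

theorem d11_comp_d12 : d11 ∘ S.d12 = d11 ∘ d22 := rfl

theorem d01_comp_d12 : S.d01 ∘ S.d12 = S.d01 ∘ S.d02 := by
  ext ⟨l, n, m₁, n₁, m₂, p⟩
  calc S.nu (n₁ * S.lam' l * n) * S.mu (m₁ * m₂) * p
      = S.nu n₁ * S.nu (S.lam' l) * (S.nu n * S.mu m₁) * S.mu m₂ * p := by
        simp only [map_mul, mul_assoc]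
    _ = S.nu n₁ * S.mu (S.lam l) * (S.mu (S.nu n • m₁) * S.nu n) * S.mu m₂ * p := by
        rw [S.mu_lam, S.mu_smul_mul]
    _ = S.nu n₁ * S.mu (S.lam l * (S.nu n • m₁)) * (S.nu n * S.mu m₂ * p) := by
        simp only [map_mul, mul_assoc]

end PrecrossedSquare

theorem truncated_simplicial_identities_general {L M N P : Type*}
    [Monoid L] [Monoid M] [Monoid N] [Monoid P] [MulAction P M]
    (S : PrecrossedSquare L M N P)
    (d01 d11 : N × M × P → P) (s00 : P → N × M × P)
    (d02 d12 d22 : L × N × M × N × M × P → N × M × P)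
    (s01 s11 : N × M × P → L × N × M × N × M × P)
    (hd01 : ∀ (n : N) (m : M) (p : P), d01 (n, m, p) = S.nu n * S.mu m * p)
    (hd11 : ∀ (n : N) (m : M) (p : P), d11 (n, m, p) = p)
    (hs00 : ∀ p : P, s00 p = (1, 1, p))
    (hd02 : ∀ (l : L) (n : N) (m₁ : M) (n₁ : N) (m₂ : M) (p : P),
      d02 (l, n, m₁, n₁, m₂, p) = (n₁, S.lam l * (S.nu n • m₁), S.nu n * S.mu m₂ * p))
    (hd12 : ∀ (l : L) (n : N) (m₁ : M) (n₁ : N) (m₂ : M) (p : P),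
      d12 (l, n, m₁, n₁, m₂, p) = (n₁ * S.lam' l * n, m₁ * m₂, p))
    (hd22 : ∀ (l : L) (n : N) (m₁ : M) (n₁ : N) (m₂ : M) (p : P),
      d22 (l, n, m₁, n₁, m₂, p) = (n, m₂, p))
    (hs01 : ∀ (n : N) (m : M) (p : P), s01 (n, m, p) = (1, 1, m, n, 1, p))
    (hs11 : ∀ (n : N) (m : M) (p : P), s11 (n, m, p) = (1, n, 1, 1, m, p)) :
    d02 ∘ s01 = id ∧ d12 ∘ s01 = id ∧ d12 ∘ s11 = id ∧ d22 ∘ s11 = id ∧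
    d22 ∘ s01 = s00 ∘ d11 ∧ d01 ∘ d12 = d01 ∘ d02 ∧ d11 ∘ d12 = d11 ∘ d22 := by
  obtain rfl : d01 = S.d01 := funext fun ⟨n, m, p⟩ ↦ hd01 n m p
  obtain rfl : d11 = PrecrossedSquare.d11 := funext fun ⟨n, m, p⟩ ↦ hd11 n m p
  obtain rfl : s00 = PrecrossedSquare.s00 := funext hs00
  obtain rfl : d02 = S.d02 := funext fun ⟨l, n, m₁, n₁, m₂, p⟩ ↦ hd02 l n m₁ n₁ m₂ p
  obtain rfl : d12 = S.d12 := funext fun ⟨l, n, m₁, n₁, m₂, p⟩ ↦ hd12 l n m₁ n₁ m₂ p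
  obtain rfl : d22 = PrecrossedSquare.d22 :=
    funext fun ⟨l, n, m₁, n₁, m₂, p⟩ ↦ hd22 l n m₁ n₁ m₂ p
  obtain rfl : s01 = PrecrossedSquare.s01 := funext fun ⟨n, m, p⟩ ↦ hs01 n m p
  obtain rfl : s11 = PrecrossedSquare.s11 := funext fun ⟨n, m, p⟩ ↦ hs11 n m p
  exact ⟨S.d02_comp_s01, S.d12_comp_s01, S.d12_comp_s11, PrecrossedSquare.d22_comp_s11,
    PrecrossedSquare.d22_comp_s01, S.d01_comp_d12, S.d11_comp_d12⟩

/-- The truncated simplicial identities for the explicit face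
and degeneracy maps built from a crossed square: `d₀²∘s₀¹ = id`, `d₁²∘s₀¹ = id`,
`d₁²∘s₁¹ = id`, `d₂²∘s₁¹ = id`, `d₂²∘s₀¹ = s₀⁰∘d₁¹`, `d₀¹∘d₁² = d₀¹∘d₀²`, and
`d₁¹∘d₁² = d₁¹∘d₂²`. -/
theorem truncated_simplicial_identities {L M N P : Type*}
    [Group L] [Group M] [Group N] [Group P]
    [MulDistribMulAction P L] [MulDistribMulAction P M] [MulDistribMulAction P N]
    (C : CrossedSquare L M N P)
    (d01 d11 : N × M × P → P) (s00 : P → N × M × P)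
    (d02 d12 d22 : L × N × M × N × M × P → N × M × P)
    (s01 s11 : N × M × P → L × N × M × N × M × P)
    (hd01 : ∀ (n : N) (m : M) (p : P), d01 (n, m, p) = C.nu n * C.mu m * p)
    (hd11 : ∀ (n : N) (m : M) (p : P), d11 (n, m, p) = p)
    (hs00 : ∀ p : P, s00 p = (1, 1, p))
    (hd02 : ∀ (l : L) (n : N) (m₁ : M) (n₁ : N) (m₂ : M) (p : P),
      d02 (l, n, m₁, n₁, m₂, p) = (n₁, C.lam l * (C.nu n • m₁), C.nu n * C.mu m₂ * p))
    (hd12 : ∀ (l : L) (n : N) (m₁ : M) (n₁ : N) (m₂ : M) (p : P),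
      d12 (l, n, m₁, n₁, m₂, p) = (n₁ * C.lam' l * n, m₁ * m₂, p))
    (hd22 : ∀ (l : L) (n : N) (m₁ : M) (n₁ : N) (m₂ : M) (p : P),
      d22 (l, n, m₁, n₁, m₂, p) = (n, m₂, p))
    (hs01 : ∀ (n : N) (m : M) (p : P), s01 (n, m, p) = (1, 1, m, n, 1, p))
    (hs11 : ∀ (n : N) (m : M) (p : P), s11 (n, m, p) = (1, n, 1, 1, m, p)) :
    d02 ∘ s01 = id ∧ d12 ∘ s01 = id ∧ d12 ∘ s11 = id ∧ d22 ∘ s11 = id ∧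
    d22 ∘ s01 = s00 ∘ d11 ∧ d01 ∘ d12 = d01 ∘ d02 ∧ d11 ∘ d12 = d11 ∘ d22 :=
  truncated_simplicial_identities_general C.toPrecrossedSquare d01 d11 s00 d02 d12 d22 s01 s11
    hd01 hd11 hs00 hd02 hd12 hd22 hs01 hs11
end

section
/- Let μ : M → P and ν : N → P be crossed modules over the same group P. Form N ⋊ (M ⋊ P), where M ⋊ P acts on N by ^{(m,p)}n := ^{μ(m)·p}n. Then d₀ : N ⋊ (M ⋊ P) → P, d₀(n,m,p) = ν(n)·μ(m)·p, is a group homomorphism, and the map f₁ : ker d₀ → M ⋊ N (where N acts on M via ν) defined by f₁(n,m,p) = (m⁻¹, n⁻¹) is a group isomorphism. -/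
/-!
A crossed module `μ : M → P` makes `M ⋊ P` an internal groupoid with source `(m, p) ↦ p` and
target `(m, p) ↦ μ(m)p`, and inversion in this groupoid, `(m, p) ↦ (m⁻¹, μ(m)p)`, is a group
automorphism exchanging the two. An element `(n, g)` of `ker d₀` satisfies `ν(n⁻¹) = target g`,
and by the Peiffer identity in `N` inverting `n` identifies `ker d₀` with the pullback of `ν` and
the target map. Groupoid inversion turns this into the pullback of `ν` and the source map, which
is `M ⋊ N`.
-/

section FiberProduct

variable {G H K L : Type*} [Group G] [Group H] [Group K] [Group L]

/-- The pullback of two group homomorphisms with common codomain, as a subgroup of the product. -/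
def fiberProduct (f : G →* K) (g : H →* K) : Subgroup (G × H) :=
  (f.comp (MonoidHom.fst G H)).eqLocus (g.comp (MonoidHom.snd G H))

namespace fiberProduct

theorem mem_iff {f : G →* K} {g : H →* K} {x : G × H} :
    x ∈ fiberProduct f g ↔ f x.1 = g x.2 :=
  Iff.rfl

/-- The isomorphism of pullbacks induced by an isomorphism of the second factor over the base. -/
def congrRight (f : G →* K) {g : H →* K} {g' : L →* K} (e : H ≃* L) (he : ∀ h, g' (e h) = g h) :
    fiberProduct f g ≃* fiberProduct f g' where
  toFun x := ⟨(x.val.1, e x.val.2), mem_iff.2 <| x.property.trans (he _).symm⟩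
  invFun y := ⟨(y.val.1, e.symm y.val.2), mem_iff.2 <| by
    rw [← he, e.apply_symm_apply]; exact y.property⟩
  left_inv x := Subtype.ext <| Prod.ext rfl (e.symm_apply_apply _)
  right_inv y := Subtype.ext <| Prod.ext rfl (e.apply_symm_apply _)
  map_mul' x y := Subtype.ext <| Prod.ext rfl (map_mul e _ _)

/-- Pulling back a split extension `G ⋊ K → K` along `f : H → K` gives the semidirect product for
the action of `H` through `f`. -/
def rightHomEquiv (f : H →* K) (φ : K →* MulAut G) :
    fiberProduct f (SemidirectProduct.rightHom : G ⋊[φ] K →* K) ≃* G ⋊[φ.comp f] H where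
  toFun x := ⟨x.val.2.left, x.val.1⟩
  invFun y := ⟨(y.right, ⟨y.left, f y.right⟩), mem_iff.2 rfl⟩
  left_inv x := Subtype.ext <| Prod.ext rfl <| SemidirectProduct.ext rfl x.property
  right_inv _ := rfl
  map_mul' x y := by
    have hx : x.val.2.right = f x.val.1 := x.property.symm
    ext
    · simp only [Subgroup.coe_mul, Prod.snd_mul, SemidirectProduct.mul_left, hx,
        MonoidHom.comp_apply]
    · rfl

end fiberProduct

end FiberProduct

section CrossedModule

variable {M P : Type*} [Group M] [Group P] [MulDistribMulAction P M] {μ : M →* P}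

/-- A precrossed module: a homomorphism into a group acting on its domain which is equivariant for
the conjugation action on the codomain. -/
structure IsPrecrossedModule_s16 (μ : M →* P) : Prop where
  map_smul : ∀ (p : P) (m : M), μ (p • m) = p * μ m * p⁻¹

/-- A crossed module: a precrossed module satisfying the Peiffer identity. -/
structure IsCrossedModule_s16 (μ : M →* P) : Prop extends IsPrecrossedModule_s16 μ where
  peiffer : ∀ m m' : M, μ m • m' = m * m' * m⁻¹

variable {G : Type*} [Group G] {t : G →* P} {φ : G →* MulAut M}

namespace IsPrecrossedModule_s16

/-- For a precrossed module `μ : M → P` and a group `G` acting on `M` through `t : G → P`, the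
homomorphism `M ⋊ G → P` sending `(m, g)` to `μ(m)t(g)`. -/
def boundary (hμ : IsPrecrossedModule_s16 μ) (hφ : ∀ g m, φ g m = t g • m) :
    M ⋊[φ] G →* P :=
  SemidirectProduct.lift μ t fun g => MonoidHom.ext fun m =>
    (congrArg μ (hφ g m)).trans (hμ.map_smul (t g) m)

theorem boundary_apply (hμ : IsPrecrossedModule_s16 μ) (hφ : ∀ g m, φ g m = t g • m)
    (x : M ⋊[φ] G) : hμ.boundary hφ x = μ x.left * t x.right :=
  rfl

theorem mem_ker_boundary (hμ : IsPrecrossedModule_s16 μ) {hφ : ∀ g m, φ g m = t g • m}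
    {x : M ⋊[φ] G} : x ∈ (hμ.boundary hφ).ker ↔ μ x.left⁻¹ = t x.right := by
  rw [MonoidHom.mem_ker, boundary_apply, map_inv, mul_eq_one_iff_inv_eq]

/-- The target map `(m, p) ↦ μ(m)p` of the internal reflexive graph in groups associated to
`μ`; the source map is `SemidirectProduct.rightHom`. -/
def target (hμ : IsPrecrossedModule_s16 μ) :
    M ⋊[MulDistribMulAction.toMulAut P M] P →* P :=
  hμ.boundary (t := MonoidHom.id P) fun _ _ => rfl

theorem target_apply (hμ : IsPrecrossedModule_s16 μ)
    (x : M ⋊[MulDistribMulAction.toMulAut P M] P) : hμ.target x = μ x.left * x.right :=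
  rfl

/-- The reversal of arrows in the internal reflexive graph associated to `μ`, as a map of sets; for
a crossed module it is inversion in the internal groupoid. -/
def arrowInv (hμ : IsPrecrossedModule_s16 μ) (x : M ⋊[MulDistribMulAction.toMulAut P M] P) :
    M ⋊[MulDistribMulAction.toMulAut P M] P :=
  ⟨x.left⁻¹, hμ.target x⟩

theorem arrowInv_involutive (hμ : IsPrecrossedModule_s16 μ) :
    Function.Involutive hμ.arrowInv := fun x => by
  ext
  · simp only [arrowInv, inv_inv]
  · simp only [arrowInv, target_apply, map_inv, inv_mul_cancel_left]

end IsPrecrossedModule_s16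

namespace IsCrossedModule_s16

theorem arrowInv_mul (hμ : IsCrossedModule_s16 μ)
    (x y : M ⋊[MulDistribMulAction.toMulAut P M] P) :
    hμ.arrowInv (x * y) = hμ.arrowInv x * hμ.arrowInv y := by
  ext
  · calc (x.left * x.right • y.left)⁻¹
      _ = x.left⁻¹ * (x.left * x.right • y.left⁻¹ * x.left⁻¹) := by
        rw [smul_inv']; group
      _ = x.left⁻¹ * (μ x.left * x.right) • y.left⁻¹ := by
        rw [mul_smul, hμ.peiffer]
  · exact map_mul hμ.target x y

/-- Inversion of arrows in the internal groupoid associated to a crossed module, as a group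
automorphism. -/
def arrowInvEquiv (hμ : IsCrossedModule_s16 μ) :
    M ⋊[MulDistribMulAction.toMulAut P M] P ≃* M ⋊[MulDistribMulAction.toMulAut P M] P :=
  MulEquiv.mk' hμ.arrowInv_involutive.toPerm hμ.arrowInv_mul

/-- The kernel of the boundary `M ⋊ G → P` is the pullback of `μ` and `t`, via
`(m, g) ↦ (m⁻¹, g)`. -/
def kerBoundaryEquiv (hμ : IsCrossedModule_s16 μ) (hφ : ∀ g m, φ g m = t g • m) :
    (hμ.boundary hφ).ker ≃* fiberProduct μ t where
  toFun x := ⟨(x.val.left⁻¹, x.val.right),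
    fiberProduct.mem_iff.2 (hμ.mem_ker_boundary.1 x.property)⟩
  invFun y := ⟨⟨y.val.1⁻¹, y.val.2⟩, hμ.mem_ker_boundary.2 <| by
    simpa only [inv_inv] using fiberProduct.mem_iff.1 y.property⟩
  left_inv _ := Subtype.ext <| SemidirectProduct.ext (inv_inv _) rfl
  right_inv _ := Subtype.ext <| Prod.ext (inv_inv _) rfl
  map_mul' x y := by
    have hact : φ x.val.right y.val.left = x.val.left⁻¹ * y.val.left * x.val.left := by
      rw [hφ, ← hμ.mem_ker_boundary.1 x.property, hμ.peiffer, inv_inv]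
    refine Subtype.ext <| Prod.ext ?_ rfl
    calc (x.val.left * φ x.val.right y.val.left)⁻¹
      _ = x.val.left⁻¹ * y.val.left⁻¹ := by rw [hact]; group

end IsCrossedModule_s16

end CrossedModule

/-- For crossed modules `μ : M → P`, `ν : N → P`, the map
`d₀(n,m,p) = ν(n)·μ(m)·p` on `N ⋊ (M ⋊ P)` (with `^{(m,p)}n = ^{μ(m)·p}n`) is a
group homomorphism, and `f₁ : ker d₀ → M ⋊ N`, `f₁(n,m,p) = (m⁻¹, n⁻¹)`
(`N` acting on `M` via `ν`) is a group isomorphism. -/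
theorem ker_d0_iso {M N P : Type*} [Group M] [Group N] [Group P]
    [MulDistribMulAction P M] [MulDistribMulAction P N]
    (μ : M →* P) (ν : N →* P)
    (hμconj : ∀ (p : P) (m : M), μ (p • m) = p * μ m * p⁻¹)
    (hμpeiffer : ∀ m m' : M, μ m • m' = m * m' * m⁻¹)
    (hνconj : ∀ (p : P) (n : N), ν (p • n) = p * ν n * p⁻¹)
    (hνpeiffer : ∀ n n' : N, ν n • n' = n * n' * n⁻¹)
    (φ : (M ⋊[MulDistribMulAction.toMulAut P M] P) →* MulAut N)
    (hφ : ∀ (g : M ⋊[MulDistribMulAction.toMulAut P M] P) (n : N),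
      φ g n = (μ g.left * g.right) • n) :
    ∃ D : (N ⋊[φ] (M ⋊[MulDistribMulAction.toMulAut P M] P)) →* P,
      (∀ g : N ⋊[φ] (M ⋊[MulDistribMulAction.toMulAut P M] P),
        D g = ν g.left * μ g.right.left * g.right.right) ∧
      ∃ e : D.ker ≃* (M ⋊[(MulDistribMulAction.toMulAut P M).comp ν] N),
        ∀ x : D.ker, e x = ⟨(x.val.right.left)⁻¹, (x.val.left)⁻¹⟩ := by
  have hμ : IsCrossedModule_s16 μ := ⟨⟨hμconj⟩, hμpeiffer⟩
  have hν : IsCrossedModule_s16 ν := ⟨⟨hνconj⟩, hνpeiffer⟩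
  have hφ_target : ∀ g n, φ g n = hμ.target g • n := hφ
  refine ⟨hν.boundary hφ_target, fun _ => (mul_assoc _ _ _).symm, ?_⟩
  let toTargetPullback := hν.kerBoundaryEquiv hφ_target
  let toSourcePullback :
      fiberProduct ν hμ.target ≃* fiberProduct ν SemidirectProduct.rightHom :=
    fiberProduct.congrRight ν hμ.arrowInvEquiv fun _ => rfl
  let toSemidirect := fiberProduct.rightHomEquiv ν (MulDistribMulAction.toMulAut P M)
  exact ⟨(toTargetPullback.trans toSourcePullback).trans toSemidirect, fun _ => rfl⟩
end
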